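/- Let n ≥ 2, t ∈ [0,1], and for k = 0, 1, …, n−1 let T_n(k) = (√((k+1)(n−k)) + √(k(n−k−1))) / (n(√k + √(k+1))). The minimum of the length |B_1^n ∩ ℓ| over all lines ℓ in ℝ^n at distance t from the origin equals: 2/√n if t ∈ [0, T_n(n−1)]; 2(1 − t√(n−k))/√k if t ∈ [T_n(k), T_n(k−1)] for some k ∈ {1, …, n−1}; and 0 if t ∈ (1/√n, 1]. -/

import Mathlib

open MeasureTheory Metric Set
open scoped ENNReal

/-!
A line at distance `t` from the origin is `{p + s u}` with `|u| = 1`, `p ⊥ u`, `|p| = t`, and the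
length of its chord is the measure of `{s | φ s ≤ 1}`, where `φ s = ‖p + s u‖₁` is convex.
Put `c_k = (1 - t √(n - k)) / √k`; the claim is that the least chord length is `2 min_k c_k`, the
minimum being over `1 ≤ k ≤ n`, as long as `t ≤ 1 / √n`.

*Lower bound.* Let `0 < c ≤ c_k` for all `k`. By the intermediate value theorem there is `m` with
`φ (m + c) = φ (m - c) = v`, and it suffices to show `v ≤ 1`. Take sign vectors `e`, `f` of the two
points `p + (m ± c) u`, and split them into `a = (e - f) / 2` and `b = (e + f) / 2`, which have
disjoint supports of sizes `k` and `n - k`. With `A = ⟨u, a⟩`, `B = ⟨u, b⟩` and `l = -B / A`, the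
two equations for `v` combine, `m` dropping out, to
`v = c A (1 - l²) + ⟨p, b + l a⟩ ≤ c A (1 - l²) + t √(n - k + k l²)`. Convexity of `φ` yields
`|l| ≤ 1`, Cauchy-Schwarz bounds `A`, and the right-hand side is then at most `1` because
`c √k + t √(n - k) ≤ 1` and `t √n ≤ 1` (`scalar_bound`, `value_bound`, `volume_chord_ge`).

*Attainment.* `c_k` is attained by a line whose direction is flat on `k` coordinates and whose base
point is flat on the remaining ones (`exists_short_chord`). If `t > 1 / √n`, the line through
`t (1, …, 1) / √n` in a direction with coordinate sum `0` misses the cross-polytope.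

*Which `k` is minimal.* The affine functions `c_k` and `c_{k+1}` of `t` cross at `T_n(k)`
(`halfLength_step`), and `T_n` is antitone since
`√(n - k - 1) / n ≤ T_n(k) ≤ √(n - k) / n` (`halfLength_min`).
-/

/-! ### The lower bound for chords -/

/-- The optimization that ends the lower bound: the worst case for `l` is `l = 0`, that is
`d = d0`. It rests on `(1 - t d0) d0 (n - d²) ≤ (1 - t d) d (n - d0²)` for `d0 ≤ d ≤ √n`, a
difference which factors through `d - d0`. -/
lemma scalar_bound {n κ t c A l d d0 v : ℝ} (hκ : 0 < κ) (hn : 0 ≤ n) (hd0 : 0 < d0) (hd : 0 ≤ d)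
    (hc : 0 ≤ c) (ht : t * √n ≤ 1) (hl : l ^ 2 ≤ 1)
    (hd0' : d0 ^ 2 = n - κ) (hd' : d ^ 2 = n - κ + κ * l ^ 2)
    (hAd : A ^ 2 * d ^ 2 ≤ κ * d0 ^ 2) (hck : c * √κ + t * d0 ≤ 1)
    (hv : v ≤ c * A * (1 - l ^ 2) + t * d) : v ≤ 1 := by
  have hsn : √n ^ 2 = n := Real.sq_sqrt hn
  have hsκ : √κ ^ 2 = κ := Real.sq_sqrt hκ.le
  have h1 : d0 ≤ d := by
    refine (abs_le_of_sq_le_sq' ?_ hd).2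
    nlinarith [mul_nonneg hκ.le (sq_nonneg l)]
  have h2 : d ≤ √n := Real.le_sqrt_of_sq_le (by nlinarith)
  have hdp : 0 < d := hd0.trans_le h1
  have h3 : A * d ≤ √κ * d0 := by
    refine (abs_le_of_sq_le_sq' ?_ (by positivity)).2
    rw [mul_pow, mul_pow, hsκ]; exact hAd
  have hnd : 0 ≤ n - d ^ 2 := by nlinarith
  have h4 : (1 - t * d0) * d0 * (n - d ^ 2) ≤ (1 - t * d) * d * (n - d0 ^ 2) := by
    have h5 : 0 ≤ n + d * d0 - t * n * (d + d0) := by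
      have : t * n * (d + d0) ≤ √n * (d + d0) := by
        apply mul_le_mul_of_nonneg_right _ (by positivity)
        nlinarith [Real.sqrt_nonneg n]
      nlinarith [mul_nonneg (sub_nonneg.2 h2) (sub_nonneg.2 (h1.trans h2))]
    nlinarith [mul_nonneg (sub_nonneg.2 h1) h5]
  have h6 : c * (A * d) * (n - d ^ 2) ≤ c * (√κ * d0) * (n - d ^ 2) := by gcongr
  have h7 : (c * √κ) * (d0 * (n - d ^ 2)) ≤ (1 - t * d0) * (d0 * (n - d ^ 2)) := by
    gcongr; linarith
  have h8 : v * (d * κ) ≤ (c * A * (1 - l ^ 2) + t * d) * (d * κ) := by gcongr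
  have h9 : v * (d * κ) ≤ 1 * (d * κ) := by
    have e1 : κ * (1 - l ^ 2) = n - d ^ 2 := by linarith
    have e2 : (c * A * (1 - l ^ 2) + t * d) * (d * κ)
        = c * (A * d) * (n - d ^ 2) + t * d ^ 2 * κ := by rw [← e1]; ring
    have e3 : n - d0 ^ 2 = κ := by linarith
    rw [e3] at h4
    nlinarith
  exact le_of_mul_le_mul_right h9 (by positivity)

lemma inner_le_of_sq {ι : Type*} [Fintype ι] (p w : ι → ℝ) {t d : ℝ} (ht : 0 ≤ t) (hd : 0 ≤ d)
    (hp : ∑ i, p i ^ 2 ≤ t ^ 2) (hw : ∑ i, w i ^ 2 ≤ d ^ 2) : ∑ i, p i * w i ≤ t * d := by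
  have h := Finset.sum_mul_sq_le_sq_mul_sq Finset.univ p w
  refine (abs_le_of_sq_le_sq' ?_ (by positivity)).2
  rw [mul_pow]
  exact h.trans (by gcongr)

/-- If the `ℓ¹` norm takes the same value `v` at the two points with parameters `m ± c`, and
`c` is at most every candidate half-length, then `v ≤ 1`. -/
lemma value_bound {n : ℕ} (p u : Fin n → ℝ) {t c m v : ℝ} (ht : 0 ≤ t) (htn : t * √n ≤ 1)
    (hu : ∑ i, u i ^ 2 = 1) (hp : ∑ i, p i ^ 2 ≤ t ^ 2) (hc : 0 < c)
    (hck : ∀ k : ℕ, 1 ≤ k → k ≤ n → c * √k + t * √((n:ℝ) - k) ≤ 1)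
    (hx : ∑ i, |p i + (m + c) * u i| = v) (hy : ∑ i, |p i + (m - c) * u i| = v) : v ≤ 1 := by
  classical
  have he : ∀ i, ∃ r : ℝ, (r = 1 ∨ r = -1) ∧
      r * (p i + (m + c) * u i) = |p i + (m + c) * u i| := by
    intro i
    rcases abs_choice (p i + (m + c) * u i) with h | h
    · exact ⟨1, by simp, by rw [h]; ring⟩
    · exact ⟨-1, by simp, by rw [h]; ring⟩
  have hf : ∀ i, ∃ r : ℝ, (r = 1 ∨ r = -1) ∧
      r * (p i + (m - c) * u i) = |p i + (m - c) * u i| := by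
    intro i
    rcases abs_choice (p i + (m - c) * u i) with h | h
    · exact ⟨1, by simp, by rw [h]; ring⟩
    · exact ⟨-1, by simp, by rw [h]; ring⟩
  -- `e` and `f` are sign vectors of the two points; a vanishing coordinate may get either sign.
  choose e he using he
  choose f hf using hf
  set a : Fin n → ℝ := fun i => (e i - f i) / 2 with ha
  set b : Fin n → ℝ := fun i => (e i + f i) / 2 with hb
  obtain ⟨k, hkn, hak, hbk⟩ : ∃ k : ℕ, k ≤ n ∧ ∑ i, a i ^ 2 = k ∧ ∑ i, b i ^ 2 = (n:ℝ) - k := by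
    refine ⟨(Finset.univ.filter fun i => e i ≠ f i).card, ?_, ?_, ?_⟩
    · simpa using Finset.card_filter_le (Finset.univ : Finset (Fin n)) (fun i => e i ≠ f i)
    · rw [Finset.card_filter]; push_cast
      refine Finset.sum_congr rfl fun i _ => ?_
      rcases (he i).1 with h | h <;> rcases (hf i).1 with h' | h' <;> simp [ha, h, h'] <;> norm_num
    · have : (n:ℝ) = ∑ i : Fin n, (1:ℝ) := by simp
      rw [Finset.card_filter, this]; push_cast
      rw [← Finset.sum_sub_distrib]
      refine Finset.sum_congr rfl fun i _ => ?_
      rcases (he i).1 with h | h <;> rcases (hf i).1 with h' | h' <;> simp [hb, h, h'] <;> norm_num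
  have hab : ∀ i, a i * b i = 0 := fun i => by
    rcases (he i).1 with h | h <;> rcases (hf i).1 with h' | h' <;> simp [ha, hb, h, h']
  set A := ∑ i, u i * a i with hA
  set B := ∑ i, u i * b i with hB
  set P := ∑ i, p i * a i with hP
  set Q := ∑ i, p i * b i with hQ
  have lin_e : ∀ s : ℝ, ∑ i, e i * (p i + s * u i) = P + Q + s * (A + B) := fun s => by
    simp only [hA, hB, hP, hQ, ha, hb, ← Finset.sum_add_distrib, Finset.mul_sum]
    exact Finset.sum_congr rfl fun i _ => by ring
  have lin_f : ∀ s : ℝ, ∑ i, f i * (p i + s * u i) = Q - P + s * (B - A) := fun s => by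
    simp only [hA, hB, hP, hQ, ha, hb, ← Finset.sum_add_distrib, ← Finset.sum_sub_distrib,
      Finset.mul_sum]
    exact Finset.sum_congr rfl fun i _ => by ring
  have sgn_le : ∀ g : Fin n → ℝ, (∀ i, g i = 1 ∨ g i = -1) → ∀ s : ℝ,
      ∑ i, g i * (p i + s * u i) ≤ ∑ i, |p i + s * u i| := fun g hg s => by
    refine Finset.sum_le_sum fun i _ => ?_
    rcases hg i with h | h <;> rw [h]
    · rw [one_mul]; exact le_abs_self _
    · rw [neg_one_mul]; exact neg_le_abs _
  have v1 : v = P + Q + (m + c) * (A + B) := by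
    rw [← lin_e, ← hx]; exact Finset.sum_congr rfl fun i _ => (he i).2.symm
  have v2 : v = Q - P + (m - c) * (B - A) := by
    rw [← lin_f, ← hy]; exact Finset.sum_congr rfl fun i _ => (hf i).2.symm
  -- Convexity: the chord over `[m - c, m + c]` is horizontal, so the subgradients at its two
  -- ends have opposite signs.
  have hAB1 : 0 ≤ A + B := by
    have h := sgn_le e (fun i => (he i).1) (m - c)
    rw [hy, lin_e] at h
    nlinarith
  have hAB2 : 0 ≤ A - B := by
    have h := sgn_le f (fun i => (hf i).1) (m + c)
    rw [hx, lin_f] at h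
    nlinarith
  have hA0 : 0 ≤ A := by linarith
  have hknR : (k:ℝ) ≤ n := by exact_mod_cast hkn
  have hQle : Q ≤ t * √((n:ℝ) - k) :=
    inner_le_of_sq p b ht (Real.sqrt_nonneg _) hp (by rw [hbk, Real.sq_sqrt (by linarith)])
  -- If `A = 0`, then `B = 0` too, and `v = Q ≤ t √n`.
  rcases hA0.eq_or_lt with hA0 | hA0
  · have hB0 : B = 0 := by linarith
    have : √((n:ℝ) - k) ≤ √n := Real.sqrt_le_sqrt (by linarith [k.cast_nonneg (α := ℝ)])
    rw [← hA0, hB0] at v1 v2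
    nlinarith
  have hCS : ∀ r s : ℝ, (r * A + s * B) ^ 2 ≤ r ^ 2 * k + s ^ 2 * (n - k) := fun r s => by
    have h := Finset.sum_mul_sq_le_sq_mul_sq Finset.univ u (fun i => r * a i + s * b i)
    have e1 : ∑ i, u i * (r * a i + s * b i) = r * A + s * B := by
      simp only [hA, hB, Finset.mul_sum, ← Finset.sum_add_distrib]
      exact Finset.sum_congr rfl fun i _ => by ring
    have e2 : ∑ i, (r * a i + s * b i) ^ 2 = r ^ 2 * k + s ^ 2 * (n - k) := by
      rw [← hbk, ← hak, Finset.mul_sum, Finset.mul_sum, ← Finset.sum_add_distrib]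
      exact Finset.sum_congr rfl fun i _ => by linear_combination 2 * r * s * hab i
    rwa [e1, e2, hu, one_mul] at h
  have hk0 : 1 ≤ k := by
    rcases Nat.eq_zero_or_pos k with h | h
    · have := hCS 1 0
      rw [h] at this
      norm_num at this
      exact absurd this hA0.ne'
    · exact h
  have hk0R : (0:ℝ) < k := by exact_mod_cast hk0
  have hc1 := hck k hk0 hkn
  rcases hkn.eq_or_lt with rfl | hlt
  · have hB0 : B = 0 := by
      have := hCS 0 1
      norm_num at this
      exact this
    have hA1 : A ≤ √(k:ℝ) := Real.le_sqrt_of_sq_le (by simpa using hCS 1 0)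
    rw [sub_self, Real.sqrt_zero] at hQle hc1
    rw [hB0] at v1 v2
    nlinarith
  have hltR : (k:ℝ) < n := by exact_mod_cast hlt
  set l := -B / A with hl
  have hlA : l * A = -B := by rw [hl]; field_simp
  have hl1 : l ^ 2 ≤ 1 := by
    rw [hl, div_pow, div_le_one (by positivity)]
    nlinarith
  set d := √((n:ℝ) - k + k * l ^ 2) with hd
  have hdsq : d ^ 2 = (n:ℝ) - k + k * l ^ 2 :=
    Real.sq_sqrt (by nlinarith [mul_nonneg hk0R.le (sq_nonneg l)])
  have hd0sq : √((n:ℝ) - k) ^ 2 = n - k := Real.sq_sqrt (by linarith)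
  refine scalar_bound (n := n) (κ := k) (l := l) (d := d) (A := A) hk0R (Nat.cast_nonneg n)
    (Real.sqrt_pos.2 (by linarith)) (Real.sqrt_nonneg _) hc.le htn hl1 hd0sq hdsq ?_ hc1 ?_
  · rw [hd0sq, hdsq]
    have e : A ^ 2 * ((n:ℝ) - k + k * l ^ 2) = (n - k) * A ^ 2 + k * B ^ 2 := by
      linear_combination (k:ℝ) * (l * A - B) * hlA
    rw [e]
    -- The weights `(n - k) A` and `k B` turn Cauchy-Schwarz into `A² / k + B² / (n - k) ≤ 1`.
    have h := hCS ((n - k) * A) (k * B)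
    have hpos : 0 < (n - k) * A ^ 2 + k * B ^ 2 := by
      have := mul_pos (sub_pos.2 hltR) (pow_pos hA0 2)
      positivity
    refine le_of_mul_le_mul_right (?_ : _ * ((n - k) * A ^ 2 + k * B ^ 2) ≤ _) hpos
    linarith
  · have h := inner_le_of_sq p (fun i => b i + l * a i) (d := d) ht (Real.sqrt_nonneg _) hp (by
      rw [hdsq, ← hbk, ← hak, Finset.sum_mul, ← Finset.sum_add_distrib]
      exact Finset.sum_le_sum fun i _ => by linarith [hab i, congrArg (l * ·) (hab i)])
    have e : ∑ i, p i * (b i + l * a i) = Q + l * P := by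
      simp only [hP, hQ, Finset.mul_sum, ← Finset.sum_add_distrib]
      exact Finset.sum_congr rfl fun i _ => by ring
    rw [e] at h
    have h0 : P + m * A + c * B = 0 := by linarith
    have hv : v = Q + m * B + c * A := by linarith
    have : v = c * A * (1 - l ^ 2) + (Q + l * P) := by
      linear_combination hv + (-l) * h0 + (c * l + m) * hlA
    linarith

/-- Every width `2c` is the width of some horizontal chord of the graph of `s ↦ ‖p + s u‖₁`. -/
lemma exists_level {n : ℕ} (p u : Fin n → ℝ) {c : ℝ} (hc : 0 ≤ c) :
    ∃ m : ℝ, ∑ i, |p i + (m + c) * u i| = ∑ i, |p i + (m - c) * u i| := by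
  set h : ℝ → ℝ := fun m => ∑ i, (|p i + (m + c) * u i| - |p i + (m - c) * u i|) with hh
  have hcont : Continuous h := by fun_prop
  -- For `|m| ≥ M`, each coordinate `p i + m u i` has the sign of `m u i`; where `u i = 0` the
  -- junk value `|p i| / 0 = 0` is harmless.
  set M := ∑ i, |p i| / |u i| with hM
  have hM0 : 0 ≤ M := Finset.sum_nonneg fun i _ => by positivity
  have hMi : ∀ i, |p i| * |u i| ≤ M * u i ^ 2 := fun i => by
    have h1 : |p i| / |u i| ≤ M :=
      Finset.single_le_sum (f := fun i => |p i| / |u i|) (fun i _ => by positivity)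
        (Finset.mem_univ i)
    rcases eq_or_ne (u i) 0 with h0 | h0
    · simp [h0]
    · have h0' : 0 < |u i| := abs_pos.2 h0
      rw [div_le_iff₀ h0'] at h1
      nlinarith [sq_abs (u i)]
  have hpos : 0 ≤ h M := Finset.sum_nonneg fun i _ => by
    rw [sub_nonneg, ← sq_le_sq]
    have h1 := hMi i
    rw [← abs_mul] at h1
    nlinarith [neg_abs_le (p i * u i), mul_nonneg hc (by linarith [neg_abs_le (p i * u i)] :
      0 ≤ p i * u i + M * u i ^ 2)]
  have hneg : h (-M) ≤ 0 := Finset.sum_nonpos fun i _ => by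
    rw [sub_nonpos, ← sq_le_sq]
    have h1 := hMi i
    rw [← abs_mul] at h1
    nlinarith [le_abs_self (p i * u i), mul_nonneg hc (by linarith [le_abs_self (p i * u i)] :
      0 ≤ -(p i * u i) + M * u i ^ 2)]
  obtain ⟨m, -, hm⟩ := intermediate_value_Icc (by linarith : -M ≤ M) hcont.continuousOn ⟨hneg, hpos⟩
  refine ⟨m, ?_⟩
  simp only [hh, Finset.sum_sub_distrib] at hm
  linarith

lemma volume_chord_ge {n : ℕ} (p u : Fin n → ℝ) {t c : ℝ} (ht : 0 ≤ t) (htn : t * √n ≤ 1)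
    (hu : ∑ i, u i ^ 2 = 1) (hp : ∑ i, p i ^ 2 ≤ t ^ 2)
    (hck : ∀ k : ℕ, 1 ≤ k → k ≤ n → c * √k + t * √((n:ℝ) - k) ≤ 1) :
    ENNReal.ofReal (2 * c) ≤ volume {s : ℝ | ∑ i, |p i + s * u i| ≤ 1} := by
  rcases le_or_gt c 0 with hc | hc
  · rw [ENNReal.ofReal_of_nonpos (by linarith)]; exact zero_le
  obtain ⟨m, hm⟩ := exists_level p u hc.le
  have h1 := value_bound p u ht htn hu hp hc hck hm rfl
  have hconv : ConvexOn ℝ univ fun s : ℝ => ∑ i, |p i + s * u i| := by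
    refine ⟨convex_univ, fun x _ y _ r s hr hs hrs => ?_⟩
    simp only [smul_eq_mul, Finset.mul_sum, ← Finset.sum_add_distrib]
    refine Finset.sum_le_sum fun i _ => ?_
    have : p i + (r * x + s * y) * u i = r * (p i + x * u i) + s * (p i + y * u i) := by
      linear_combination (-p i) * hrs
    rw [this]
    refine (abs_add_le _ _).trans ?_
    rw [abs_mul, abs_mul, abs_of_nonneg hr, abs_of_nonneg hs]
  have hset := (hconv.convex_le 1).ordConnected.out
    (x := m - c) ⟨mem_univ _, h1⟩ (y := m + c) ⟨mem_univ _, hm.trans_le h1⟩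
  calc ENNReal.ofReal (2 * c) = volume (Icc (m - c) (m + c)) := by
        rw [Real.volume_Icc]; congr 1; ring
    _ ≤ _ := measure_mono fun s hs => (hset hs).2

/-! ### Lines in coordinates -/

lemma infDist_line {n : ℕ} (p u : EuclideanSpace ℝ (Fin n)) (hpu : inner ℝ p u = 0) :
    Metric.infDist 0 (AffineSubspace.mk' p (ℝ ∙ u) : Set (EuclideanSpace ℝ (Fin n))) = ‖p‖ := by
  apply le_antisymm
  · have h := Metric.infDist_le_dist_of_mem (x := (0 : EuclideanSpace ℝ (Fin n)))
      (AffineSubspace.self_mem_mk' p (ℝ ∙ u))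
    simpa using h
  · refine (Metric.le_infDist ⟨p, AffineSubspace.self_mem_mk' p (ℝ ∙ u)⟩).2 fun y hy => ?_
    obtain ⟨s, hs⟩ := Submodule.mem_span_singleton.1 (AffineSubspace.mem_mk'.1 hy)
    have hy' : y = p + s • u := by rw [hs, vsub_eq_sub]; abel
    have h := norm_add_sq_eq_norm_sq_add_norm_sq_of_inner_eq_zero p (s • u)
      (by rw [inner_smul_right, hpu, mul_zero])
    rw [dist_zero_left, hy']
    nlinarith [norm_nonneg p, norm_nonneg (p + s • u), norm_nonneg (s • u)]

lemma chord_measure {n : ℕ} (p u : EuclideanSpace ℝ (Fin n)) (hu : ‖u‖ = 1) :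
    μH[1] ({x : EuclideanSpace ℝ (Fin n) | ∑ i, |x i| ≤ 1} ∩ AffineSubspace.mk' p (ℝ ∙ u)) =
      volume {s : ℝ | ∑ i, |p i + s * u i| ≤ 1} := by
  have hiso : Isometry fun s : ℝ => p + s • u := Isometry.of_dist_eq fun x y => by
    rw [dist_add_left, dist_eq_norm, ← sub_smul, norm_smul, hu, mul_one, ← dist_eq_norm]
  rw [← hausdorffMeasure_real, ← hiso.hausdorffMeasure_image (Or.inl zero_le_one)]
  congr 1
  ext x
  simp only [mem_inter_iff, mem_ofPred_eq, SetLike.mem_coe, AffineSubspace.mem_mk',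
    Submodule.mem_span_singleton, mem_image, vsub_eq_sub]
  constructor
  · rintro ⟨h, s, hs⟩
    have : p + s • u = x := by rw [hs]; abel
    exact ⟨s, by rw [← this] at h; simpa using h, this⟩
  · rintro ⟨s, h, rfl⟩
    exact ⟨by simpa using h, s, by abel⟩

lemma exists_param {n : ℕ} (ℓ : AffineSubspace ℝ (EuclideanSpace ℝ (Fin n)))
    (h : Module.finrank ℝ ℓ.direction = 1) :
    ∃ p u : EuclideanSpace ℝ (Fin n), ‖u‖ = 1 ∧ inner ℝ p u = 0 ∧
      ℓ = AffineSubspace.mk' p (ℝ ∙ u) := by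
  have hne : (ℓ : Set (EuclideanSpace ℝ (Fin n))).Nonempty := by
    rw [AffineSubspace.nonempty_iff_ne_bot]
    rintro rfl
    rw [AffineSubspace.direction_bot, finrank_bot] at h
    exact zero_ne_one h
  obtain ⟨q, hq⟩ := hne
  obtain ⟨w, hw, hspan⟩ := finrank_eq_one_iff'.1 h
  set u : EuclideanSpace ℝ (Fin n) := (‖(w : EuclideanSpace ℝ (Fin n))‖⁻¹) • w with hu
  have hw' : ‖(w : EuclideanSpace ℝ (Fin n))‖ ≠ 0 := by simpa using hw
  have hu1 : ‖u‖ = 1 := by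
    rw [hu, norm_smul, norm_inv, norm_norm, inv_mul_cancel₀ hw']
  have hud : u ∈ ℓ.direction := ℓ.direction.smul_mem _ w.2
  have hdir : ℓ.direction = ℝ ∙ u := by
    apply le_antisymm
    · intro x hx
      obtain ⟨s, hs⟩ := hspan ⟨x, hx⟩
      refine Submodule.mem_span_singleton.2 ⟨s * ‖(w : EuclideanSpace ℝ (Fin n))‖, ?_⟩
      rw [hu, smul_smul, mul_assoc, mul_inv_cancel₀ hw', mul_one]
      exact congrArg Subtype.val hs
    · rwa [Submodule.span_singleton_le_iff_mem]
  refine ⟨q - inner ℝ q u • u, u, hu1, ?_, ?_⟩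
  · rw [inner_sub_left, inner_smul_left, real_inner_self_eq_norm_sq, hu1]
    simp
  · rw [← hdir]
    symm
    have : q - inner ℝ q u • u ∈ ℓ := by
      have := AffineSubspace.vadd_mem_of_mem_direction
        (ℓ.direction.smul_mem (-inner ℝ q u) hud) hq
      rwa [vadd_eq_add, neg_smul, neg_add_eq_sub] at this
    exact AffineSubspace.mk'_eq this

/-- The set of chord lengths in terms of base points `p`, unit directions `u ⊥ p` and Lebesgue
measure of parameter sets. -/
lemma chord_set_eq {n : ℕ} {t : ℝ} (ht : 0 ≤ t) :
    { L : ℝ≥0∞ | ∃ ℓ : AffineSubspace ℝ (EuclideanSpace ℝ (Fin n)),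
        Module.finrank ℝ ℓ.direction = 1 ∧
        Metric.infDist 0 (ℓ : Set (EuclideanSpace ℝ (Fin n))) = t ∧
        L = μH[1] ({x : EuclideanSpace ℝ (Fin n) | ∑ i, |x i| ≤ 1} ∩ ℓ) } =
    { L : ℝ≥0∞ | ∃ p u : Fin n → ℝ, ∑ i, u i ^ 2 = 1 ∧ ∑ i, p i ^ 2 = t ^ 2 ∧
        ∑ i, p i * u i = 0 ∧ L = volume {s : ℝ | ∑ i, |p i + s * u i| ≤ 1} } := by
  ext L
  constructor
  · rintro ⟨ℓ, h1, h2, rfl⟩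
    obtain ⟨p, u, hu, hpu, rfl⟩ := exists_param ℓ h1
    rw [infDist_line p u hpu] at h2
    refine ⟨p, u, ?_, ?_, ?_, chord_measure p u hu⟩
    · rw [← EuclideanSpace.real_norm_sq_eq, hu, one_pow]
    · rw [← EuclideanSpace.real_norm_sq_eq, h2]
    · rw [← hpu, PiLp.inner_apply]
      exact Finset.sum_congr rfl fun i _ => by simp [mul_comm]
  · rintro ⟨p, u, hu, hp, hpu, rfl⟩
    have hu' : ‖WithLp.toLp 2 u‖ = 1 := by
      rw [← sq_eq_sq₀ (norm_nonneg _) zero_le_one, EuclideanSpace.real_norm_sq_eq, one_pow, ← hu]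
    have hp' : ‖WithLp.toLp 2 p‖ = t := by
      rw [← sq_eq_sq₀ (norm_nonneg _) ht, EuclideanSpace.real_norm_sq_eq, ← hp]
    have hpu' : inner ℝ (WithLp.toLp 2 p) (WithLp.toLp 2 u) = 0 := by
      rw [← hpu, PiLp.inner_apply]
      exact Finset.sum_congr rfl fun i _ => by simp [mul_comm]
    refine ⟨AffineSubspace.mk' (WithLp.toLp 2 p) (ℝ ∙ WithLp.toLp 2 u), ?_, ?_, ?_⟩
    · rw [AffineSubspace.direction_mk']
      exact finrank_span_singleton (by rw [← norm_ne_zero_iff, hu']; exact one_ne_zero)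
    · rw [infDist_line _ _ hpu', hp']
    · rw [chord_measure _ _ hu']

/-! ### Comparing the candidate lengths -/

/-- The breakpoint `T_n(k)`. -/
noncomputable def breakpoint (n k : ℕ) : ℝ :=
  (Real.sqrt (((k:ℝ) + 1) * ((n:ℝ) - k)) + Real.sqrt ((k:ℝ) * ((n:ℝ) - k - 1))) /
    ((n:ℝ) * (Real.sqrt (k:ℝ) + Real.sqrt ((k:ℝ) + 1)))

/-- The candidate half-length `(1 - t √(n - k)) / √k`, meaningful for `1 ≤ k ≤ n`; it is `1 / √n`
for `k = n`. -/
noncomputable def halfLength (n : ℕ) (t : ℝ) (k : ℕ) : ℝ := (1 - t * √((n:ℝ) - k)) / √k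

lemma breakpoint_mul {n k : ℕ} (hk : k < n) :
    breakpoint n k * (n * (√(k:ℝ) + √((k:ℝ) + 1))) =
      √((k:ℝ) + 1) * √((n:ℝ) - k) + √(k:ℝ) * √((n:ℝ) - k - 1) := by
  have h : (0:ℝ) < n * (√(k:ℝ) + √((k:ℝ) + 1)) := by
    have : (0:ℝ) < n := by exact_mod_cast (Nat.zero_le k).trans_lt hk
    positivity
  rw [breakpoint, div_mul_cancel₀ _ h.ne', Real.sqrt_mul (by positivity),
    Real.sqrt_mul (by positivity)]

lemma breakpoint_le {n k : ℕ} (hk : k < n) : breakpoint n k ≤ √((n:ℝ) - k) / n := by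
  have hn : (0:ℝ) < n := by exact_mod_cast (Nat.zero_le k).trans_lt hk
  have h1 : √((n:ℝ) - k - 1) ≤ √((n:ℝ) - k) := Real.sqrt_le_sqrt (by linarith)
  have hs : 0 < √(k:ℝ) + √((k:ℝ) + 1) := by positivity
  rw [le_div_iff₀ hn, ← mul_le_mul_iff_of_pos_right hs, mul_assoc, breakpoint_mul hk]
  nlinarith [mul_le_mul_of_nonneg_left h1 (Real.sqrt_nonneg (k:ℝ))]

lemma le_breakpoint {n k : ℕ} (hk : k < n) : √((n:ℝ) - k - 1) / n ≤ breakpoint n k := by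
  have hn : (0:ℝ) < n := by exact_mod_cast (Nat.zero_le k).trans_lt hk
  have h1 : √((n:ℝ) - k - 1) ≤ √((n:ℝ) - k) := Real.sqrt_le_sqrt (by linarith)
  have hs : 0 < √(k:ℝ) + √((k:ℝ) + 1) := by positivity
  rw [div_le_iff₀ hn, ← mul_le_mul_iff_of_pos_right hs, mul_assoc, breakpoint_mul hk]
  nlinarith [mul_le_mul_of_nonneg_left h1 (Real.sqrt_nonneg ((k:ℝ) + 1))]

lemma breakpoint_anti {n j k : ℕ} (hjk : j ≤ k) (hk : k < n) :
    breakpoint n k ≤ breakpoint n j := by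
  induction k, hjk using Nat.le_induction with
  | base => exact le_rfl
  | succ m _ ih =>
    refine le_trans ?_ (ih (by omega))
    refine (breakpoint_le hk).trans (le_trans ?_ (le_breakpoint (by omega)))
    push_cast
    rw [sub_sub]

lemma halfLength_step {n k : ℕ} (t : ℝ) (hk0 : 1 ≤ k) (hk : k < n) :
    (breakpoint n k ≤ t → halfLength n t k ≤ halfLength n t (k + 1)) ∧
      (t ≤ breakpoint n k → halfLength n t (k + 1) ≤ halfLength n t k) := by
  have hn : (0:ℝ) < n := by exact_mod_cast (Nat.zero_le k).trans_lt hk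
  have hk1 : (1:ℝ) ≤ k := by exact_mod_cast hk0
  have hkn : (k:ℝ) + 1 ≤ n := by exact_mod_cast hk
  have hT := breakpoint_mul hk
  simp only [halfLength]
  push_cast
  rw [← sub_sub]
  have a1 : √(k:ℝ) ^ 2 = k := Real.sq_sqrt (by linarith)
  have a2 : √((k:ℝ) + 1) ^ 2 = k + 1 := Real.sq_sqrt (by linarith)
  have b1 : √((n:ℝ) - k) ^ 2 = n - k := Real.sq_sqrt (by linarith)
  have b2 : √((n:ℝ) - k - 1) ^ 2 = n - k - 1 := Real.sq_sqrt (by linarith)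
  have pa : 0 < √(k:ℝ) := Real.sqrt_pos.2 (by linarith)
  have pa' : 0 < √((k:ℝ) + 1) := Real.sqrt_pos.2 (by linarith)
  have pb : 0 < √((n:ℝ) - k) := Real.sqrt_pos.2 (by linarith)
  have pb' : 0 ≤ √((n:ℝ) - k - 1) := Real.sqrt_nonneg _
  generalize √(k:ℝ) = a at *
  generalize √((k:ℝ) + 1) = a' at *
  generalize √((n:ℝ) - k) = b at *
  generalize √((n:ℝ) - k - 1) = b' at *
  -- `breakpoint n k` is the abscissa at which the two affine functions of `t` cross.
  have hcross : breakpoint n k * (a' * b - a * b') = a' - a := by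
    have hs : (n:ℝ) * (a + a') ≠ 0 := by positivity
    apply mul_right_cancel₀ hs
    have e1 : (a' * b - a * b') * (a' * b + a * b') = n := by
      have : (a' * b - a * b') * (a' * b + a * b') = a' ^ 2 * b ^ 2 - a ^ 2 * b' ^ 2 := by ring
      rw [this, a1, a2, b1, b2]; ring
    have e2 : (a' - a) * (a + a') = 1 := by
      have : (a' - a) * (a + a') = a' ^ 2 - a ^ 2 := by ring
      rw [this, a1, a2]; ring
    linear_combination (a' * b - a * b') * hT + e1 - n * e2
  have hD : 0 < a' * b - a * b' := by
    have h1 : a < a' := by nlinarith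
    have h2 : b' < b := by nlinarith
    nlinarith
  constructor
  · intro h
    rw [div_le_div_iff₀ pa pa']
    nlinarith [mul_le_mul_of_nonneg_right h hD.le]
  · intro h
    rw [div_le_div_iff₀ pa' pa]
    nlinarith [mul_le_mul_of_nonneg_right h hD.le]

/-- For `t` between the breakpoints `T_n(k)` and `T_n(k - 1)` (no lower constraint if `k = n`), the
smallest candidate is the one with index `k`. -/
lemma halfLength_min {n k : ℕ} {t : ℝ} (hk0 : 1 ≤ k) (hkn : k ≤ n)
    (h1 : k < n → breakpoint n k ≤ t) (h2 : t ≤ breakpoint n (k - 1)) {j : ℕ} (hj0 : 1 ≤ j)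
    (hjn : j ≤ n) : halfLength n t k ≤ halfLength n t j := by
  rcases le_total k j with h | h
  · induction j, h using Nat.le_induction with
    | base => exact le_rfl
    | succ m hm ih =>
      refine (ih (by omega) (by omega)).trans ((halfLength_step t (by omega) hjn).1 ?_)
      exact (breakpoint_anti hm hjn).trans (h1 (by omega))
  · obtain ⟨d, rfl⟩ := Nat.exists_eq_add_of_le h
    clear h1
    induction d with
    | zero => exact le_rfl
    | succ d ih =>
      have h3 : t ≤ breakpoint n (j + d) := h2
      refine ((halfLength_step t (by omega) (by omega)).2 h3).trans ?_
      exact ih (by omega) (by omega) (h3.trans (breakpoint_anti (by omega) (by omega))) (by omega)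

/-! ### Short chords and conclusion -/

lemma volume_chord_le {n : ℕ} (p u : Fin n → ℝ) {r q : ℝ} (hr : 0 < r)
    (h : ∀ s : ℝ, q + |s| * r ≤ ∑ i, |p i + s * u i|) :
    volume {s : ℝ | ∑ i, |p i + s * u i| ≤ 1} ≤ ENNReal.ofReal (2 * ((1 - q) / r)) := by
  calc volume {s : ℝ | ∑ i, |p i + s * u i| ≤ 1}
      ≤ volume (Icc (-((1 - q) / r)) ((1 - q) / r)) := by
        refine measure_mono fun s hs => ?_
        have h1 : q + |s| * r ≤ 1 := (h s).trans hs
        exact abs_le.1 ((le_div_iff₀ hr).2 (by linarith))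
    _ = _ := by rw [Real.volume_Icc]; congr 1; ring

lemma exists_unit_sum_zero {n : ℕ} (hn : 2 ≤ n) :
    ∃ z : Fin n → ℝ, ∑ i, z i ^ 2 = 1 ∧ ∑ i, z i = 0 := by
  obtain ⟨m, rfl⟩ := Nat.exists_eq_add_of_le' hn
  refine ⟨Fin.cons (√(1 / 2)) (Fin.cons (-√(1 / 2)) 0), ?_, ?_⟩
  · have : √(1 / 2 : ℝ) ^ 2 = 1 / 2 := Real.sq_sqrt (by norm_num)
    simp only [Fin.sum_univ_succ, Fin.cons_zero, Fin.cons_succ, Pi.zero_apply, neg_sq, this]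
    norm_num
  · simp [Fin.sum_univ_succ]

lemma sum_ite_card {n k : ℕ} {K : Finset (Fin n)} (hK : K.card = k) (x y : ℝ) :
    ∑ i, (if i ∈ K then x else y) = k * x + ((n:ℝ) - k) * y := by
  have hle : K.card ≤ n := by simpa using K.card_le_univ
  rw [← Finset.sum_add_sum_compl K, Finset.sum_congr rfl fun i hi => if_pos hi,
    Finset.sum_congr rfl fun i (hi : i ∈ Kᶜ) => if_neg (Finset.mem_compl.1 hi)]
  simp [Finset.card_compl, hK, Nat.cast_sub (hK ▸ hle)]

/-- For `k = n` any base point orthogonal to `(1, …, 1)` works, because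
`|s| √n = |∑ i, (p + s u) i| ≤ ‖p + s u‖₁`. -/
lemma exists_short_chord {n k : ℕ} {t : ℝ} (ht : 0 ≤ t) (hn : 2 ≤ n) (hk0 : 1 ≤ k) (hkn : k ≤ n) :
    ∃ p u : Fin n → ℝ, ∑ i, u i ^ 2 = 1 ∧ ∑ i, p i ^ 2 = t ^ 2 ∧ ∑ i, p i * u i = 0 ∧
      volume {s : ℝ | ∑ i, |p i + s * u i| ≤ 1} ≤ ENNReal.ofReal (2 * halfLength n t k) := by
  classical
  have hk : (0:ℝ) < k := by exact_mod_cast hk0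
  have pa : 0 < √(k:ℝ) := Real.sqrt_pos.2 hk
  have a1 : √(k:ℝ) ^ 2 = k := Real.sq_sqrt hk.le
  rcases hkn.eq_or_lt with rfl | hlt
  · obtain ⟨z, hz, hz0⟩ := exists_unit_sum_zero hn
    refine ⟨fun i => t * z i, fun _ => 1 / √(k:ℝ), ?_, ?_, ?_, ?_⟩
    · simp only [div_pow, a1, Finset.sum_const, Finset.card_univ, Fintype.card_fin, nsmul_eq_mul]
      field_simp
    · simp only [mul_pow, ← Finset.mul_sum, hz, mul_one]
    · simp only [← Finset.sum_mul, ← Finset.mul_sum, hz0, mul_zero, zero_mul]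
    · refine volume_chord_le _ _ pa fun s => ?_
      refine le_trans (le_of_eq ?_) (Finset.abs_sum_le_sum_abs _ _)
      simp only [Finset.sum_add_distrib, ← Finset.mul_sum, hz0, Finset.sum_const, Finset.card_univ,
        Fintype.card_fin, nsmul_eq_mul, sub_self, Real.sqrt_zero, mul_zero, zero_add, abs_mul]
      congr 1
      rw [abs_of_pos (show 0 < 1 / √(k:ℝ) by positivity)]
      field_simp
      rw [a1, abs_of_pos hk]
  · have hnk : (0:ℝ) < n - k := by rw [sub_pos]; exact_mod_cast hlt
    have pb : 0 < √((n:ℝ) - k) := Real.sqrt_pos.2 hnk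
    have b1 : √((n:ℝ) - k) ^ 2 = n - k := Real.sq_sqrt hnk.le
    obtain ⟨K, -, hK⟩ := Finset.exists_subset_card_eq
      (s := (Finset.univ : Finset (Fin n))) (n := k) (by simpa using hkn)
    refine ⟨fun i => if i ∈ K then 0 else t / √((n:ℝ) - k),
      fun i => if i ∈ K then 1 / √(k:ℝ) else 0, ?_, ?_, ?_, ?_⟩
    · simp only [ite_pow]
      rw [sum_ite_card hK, div_pow, a1]
      field_simp
      ring
    · simp only [ite_pow]
      rw [sum_ite_card hK, div_pow, b1]
      field_simp
      ring
    · exact Finset.sum_eq_zero fun i _ => by by_cases h : i ∈ K <;> simp [h]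
    · refine volume_chord_le _ _ pa fun s => le_of_eq ?_
      have h : ∀ i, |(if i ∈ K then 0 else t / √((n:ℝ) - k)) +
          s * (if i ∈ K then 1 / √(k:ℝ) else 0)| =
          if i ∈ K then |s| / √(k:ℝ) else t / √((n:ℝ) - k) := fun i => by
        by_cases h : i ∈ K
        · simp [h, abs_mul, abs_of_pos pa, div_eq_mul_inv]
        · simp only [h, if_false, mul_zero, add_zero]
          exact abs_of_nonneg (by positivity)
      rw [Finset.sum_congr rfl fun i _ => h i, sum_ite_card hK]
      have e1 : (k:ℝ) * (|s| / √(k:ℝ)) = |s| * √(k:ℝ) := by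
        field_simp
        linear_combination (-|s|) * a1
      have e2 : ((n:ℝ) - k) * (t / √((n:ℝ) - k)) = t * √((n:ℝ) - k) := by
        field_simp
        linear_combination (-t) * b1
      rw [e1, e2, add_comm]

lemma isLeast_halfLength {n k : ℕ} {t : ℝ} (ht : 0 ≤ t) (hn : 2 ≤ n) (hk0 : 1 ≤ k) (hkn : k ≤ n)
    (h1 : k < n → breakpoint n k ≤ t) (h2 : t ≤ breakpoint n (k - 1)) :
    IsLeast { L : ℝ≥0∞ | ∃ p u : Fin n → ℝ, ∑ i, u i ^ 2 = 1 ∧ ∑ i, p i ^ 2 = t ^ 2 ∧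
        ∑ i, p i * u i = 0 ∧ L = volume {s : ℝ | ∑ i, |p i + s * u i| ≤ 1} }
      (ENNReal.ofReal (2 * halfLength n t k)) := by
  have hn0 : (0:ℝ) < n := by exact_mod_cast (by omega : 0 < n)
  -- `T_n(k - 1) ≤ T_n(0) ≤ 1 / √n`.
  have htn : t * √n ≤ 1 := by
    have h := (h2.trans (breakpoint_anti (Nat.zero_le _) (by omega))).trans
      (breakpoint_le (n := n) (k := 0) (by omega))
    rw [Nat.cast_zero, sub_zero, le_div_iff₀ hn0] at h
    have hs : 0 < √(n:ℝ) := Real.sqrt_pos.2 hn0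
    nlinarith [Real.sq_sqrt hn0.le]
  have lower : ∀ p u : Fin n → ℝ, ∑ i, u i ^ 2 = 1 → ∑ i, p i ^ 2 = t ^ 2 →
      ENNReal.ofReal (2 * halfLength n t k) ≤ volume {s : ℝ | ∑ i, |p i + s * u i| ≤ 1} := by
    intro p u hu hp
    refine volume_chord_ge p u ht htn hu hp.le fun j hj0 hjn => ?_
    have h := halfLength_min hk0 hkn h1 h2 hj0 hjn
    rw [halfLength.eq_def n t j, le_div_iff₀ (Real.sqrt_pos.2 (by exact_mod_cast hj0))] at h
    linarith
  constructor
  · obtain ⟨p, u, hu, hp, hpu, hle⟩ := exists_short_chord ht hn hk0 hkn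
    exact ⟨p, u, hu, hp, hpu, le_antisymm (lower p u hu hp) hle⟩
  · rintro L ⟨p, u, hu, hp, -, rfl⟩
    exact lower p u hu hp

lemma isLeast_zero {n : ℕ} {t : ℝ} (hn : 2 ≤ n) (h : 1 / √(n:ℝ) < t) :
    IsLeast { L : ℝ≥0∞ | ∃ p u : Fin n → ℝ, ∑ i, u i ^ 2 = 1 ∧ ∑ i, p i ^ 2 = t ^ 2 ∧
        ∑ i, p i * u i = 0 ∧ L = volume {s : ℝ | ∑ i, |p i + s * u i| ≤ 1} } 0 := by
  have hn0 : (0:ℝ) < n := by exact_mod_cast (by omega : 0 < n)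
  have hs : 0 < √(n:ℝ) := Real.sqrt_pos.2 hn0
  have hsq : √(n:ℝ) ^ 2 = n := Real.sq_sqrt hn0.le
  obtain ⟨z, hz, hz0⟩ := exists_unit_sum_zero hn
  refine ⟨⟨fun _ => t / √(n:ℝ), z, hz, ?_, ?_, ?_⟩, fun _ _ => zero_le⟩
  · simp only [div_pow, hsq, Finset.sum_const, Finset.card_univ, Fintype.card_fin, nsmul_eq_mul]
    field_simp
  · rw [← Finset.mul_sum, hz0, mul_zero]
  · symm
    convert measure_empty (μ := (volume : Measure ℝ))
    rw [eq_empty_iff_forall_notMem]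
    intro s hmem
    have h1 : ∑ i, (t / √(n:ℝ) + s * z i) ≤ 1 :=
      (Finset.sum_le_sum fun i _ => le_abs_self _).trans hmem
    rw [Finset.sum_add_distrib, ← Finset.mul_sum, hz0, mul_zero, add_zero, Finset.sum_const,
      Finset.card_univ, Fintype.card_fin, nsmul_eq_mul] at h1
    have h2 : (n:ℝ) * (t / √(n:ℝ)) = t * √(n:ℝ) := by
      field_simp
      linear_combination (-t) * hsq
    rw [div_lt_iff₀ hs] at h
    linarith

theorem stmt3 (n : ℕ) (hn : 2 ≤ n) (t : ℝ) (ht : t ∈ Set.Icc (0:ℝ) 1)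
    (T : ℕ → ℝ)
    (hT : ∀ k : ℕ, T k =
      (Real.sqrt (((k:ℝ) + 1) * ((n:ℝ) - k)) + Real.sqrt ((k:ℝ) * ((n:ℝ) - k - 1))) /
        ((n:ℝ) * (Real.sqrt (k:ℝ) + Real.sqrt ((k:ℝ) + 1))))
    (S : Set ℝ≥0∞)
    (hS : S = { L : ℝ≥0∞ | ∃ ℓ : AffineSubspace ℝ (EuclideanSpace ℝ (Fin n)),
        Module.finrank ℝ ℓ.direction = 1 ∧
        Metric.infDist 0 (ℓ : Set (EuclideanSpace ℝ (Fin n))) = t ∧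
        L = μH[1] ({x : EuclideanSpace ℝ (Fin n) | ∑ i, |x i| ≤ 1} ∩ ℓ) }) :
    (t ≤ T (n - 1) → IsLeast S (ENNReal.ofReal (2 / Real.sqrt n))) ∧
    (∀ k : ℕ, 1 ≤ k → k ≤ n - 1 → T k ≤ t → t ≤ T (k - 1) →
      IsLeast S (ENNReal.ofReal (2 * (1 - t * Real.sqrt ((n:ℝ) - k)) / Real.sqrt k))) ∧
    (1 / Real.sqrt n < t → IsLeast S 0) := by
  obtain rfl : T = breakpoint n := funext hT
  rw [chord_set_eq ht.1] at hS
  subst hS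
  refine ⟨fun h => ?_, fun k hk0 hkn h1 h2 => ?_, isLeast_zero hn⟩
  · have key := isLeast_halfLength (k := n) ht.1 hn (by omega) le_rfl
      (fun h => absurd h (lt_irrefl n)) h
    have e : 2 * halfLength n t n = 2 / √(n:ℝ) := by
      rw [halfLength, sub_self, Real.sqrt_zero, mul_zero, sub_zero, mul_one_div]
    rwa [e] at key
  · have key := isLeast_halfLength (k := k) ht.1 hn hk0 (by omega) (fun _ => h1) h2
    rwa [halfLength, ← mul_div_assoc] at key
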